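/- For every real α with 0 < α < 1/2 and every integer n ≥ 2, the chain of strict inequalities d_{n−1}(α) > d_n(α) > (1/2)·d_{n−1}(α) > 0 holds. -/

import Mathlib

/-- `dpoly n α = ∑_{m=0}^{⌊n/2⌋} (-1)^m C(n-m, m) α^(2m)`. -/
noncomputable def dpoly (n : ℕ) (α : ℝ) : ℝ :=
  ∑ m ∈ Finset.range (n / 2 + 1), (-1 : ℝ) ^ m * (Nat.choose (n - m) m : ℝ) * α ^ (2 * m)

theorem dpoly_ext (n N : ℕ) (α : ℝ) (h : n / 2 + 1 ≤ N) :
    dpoly n α = ∑ m ∈ Finset.range N,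
      (-1 : ℝ) ^ m * (Nat.choose (n - m) m : ℝ) * α ^ (2 * m) := by
  unfold dpoly
  apply Finset.sum_subset
  · intro x hx
    simp only [Finset.mem_range] at *
    omega
  · intro x _ hx
    simp only [Finset.mem_range] at hx
    rw [Nat.choose_eq_zero_of_lt (by omega)]
    simp

theorem dpoly_rec (n : ℕ) (α : ℝ) :
    dpoly (n + 2) α = dpoly (n + 1) α - α ^ 2 * dpoly n α := by
  rw [dpoly_ext (n + 2) (n + 1 + 1) α (by omega), dpoly_ext (n + 1) (n + 1 + 1) α (by omega),
    dpoly_ext n (n + 1) α (by omega), Finset.sum_range_succ', Finset.sum_range_succ' _ (n + 1),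
    Finset.mul_sum, add_sub_right_comm, ← Finset.sum_sub_distrib]
  congr 1
  · apply Finset.sum_congr rfl
    intro m hm
    simp only [Finset.mem_range] at hm
    have h1 : n + 2 - (m + 1) = (n - m) + 1 := by omega
    have h2 : n + 1 - (m + 1) = n - m := by omega
    rw [h1, h2, Nat.choose_succ_succ]
    push_cast
    ring

theorem dpoly_ind (α : ℝ) (hα0 : 0 < α) (hα1 : α < 1 / 2) (n : ℕ) :
    0 < dpoly n α ∧ 1 / 2 * dpoly n α < dpoly (n + 1) α := by
  induction n with
  | zero => norm_num [dpoly]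
  | succ k ih =>
    obtain ⟨h0, h1⟩ := ih
    have h2 : α ^ 2 < 1 / 4 := by nlinarith
    refine ⟨by linarith, ?_⟩
    rw [dpoly_rec]
    nlinarith [mul_lt_mul_of_pos_right h2 h0]

theorem stmt7 (α : ℝ) (hα0 : 0 < α) (hα1 : α < 1 / 2) (n : ℕ) (hn : 2 ≤ n) :
    dpoly (n - 1) α > dpoly n α ∧ dpoly n α > (1 / 2) * dpoly (n - 1) α ∧
      (1 / 2) * dpoly (n - 1) α > 0 := by
  obtain ⟨k, rfl⟩ := Nat.exists_eq_add_of_le' hn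
  have h0 := dpoly_ind α hα0 hα1 k
  have h1 := dpoly_ind α hα0 hα1 (k + 1)
  have e : k + 2 - 1 = k + 1 := by omega
  rw [e]
  refine ⟨?_, h1.2, by linarith [h1.1]⟩
  rw [dpoly_rec]
  have : 0 < α ^ 2 * dpoly k α := mul_pos (by positivity) h0.1
  linarith
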